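/- arXiv:2102.02987 — 6 statements merged into one kernel-verified Lean document; each statement's English description precedes it below -/
import Mathlib

section
/- (Proposition 1, per-period form) Let A = U(I₁, s₁, N₁) and B = U(I₂, s₂, N₂) be two ULAs with s₁ ≥ 1 and s₂ > (N₁ − 1)s₁, and set g = I₂ − (I₁ + (N₁−1)s₁). Then the inter-difference coarray {q − p : q ∈ B, p ∈ A} equals {g + j·s₂ + k·s₁ : 0 ≤ j ≤ N₂−1, 0 ≤ k ≤ N₁−1}, and for every j ∈ {0,…,N₂−1} exactly N₁ of its elements d satisfy g + j·s₂ ≤ d < g + (j+1)·s₂; that is, each period of length s₂ contains the same number of coarray elements as the prototype sub-ULA A has sensors. -/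
/-!
An array is symmetric about its centre, so the coarray `B - A` is the sumset of `B` and a translate
of `A`: it consists of `N₂` copies of `A`, the first starting at `g`, with consecutive copies
`s₂` apart. The span `(N₁ - 1) * s₁` of `A` is smaller than `s₂`, so each period contains exactly
one of these copies.
-/

/-- The uniform linear array with initial position `I`, interspace `s` and `N` sensors. -/
def ULA (I s : ℤ) (N : ℕ) : Finset ℤ :=
  (Finset.range N).image fun k : ℕ => I + (k : ℤ) * s

/-- Inter-difference coarray from `A` to `B`: the set `{q - p : q ∈ B, p ∈ A}`. -/
def idca (A B : Finset ℤ) : Finset ℤ := (B ×ˢ A).image fun p => p.1 - p.2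

section

open Finset
open scoped Pointwise

theorem idca_eq_sub (A B : Finset ℤ) : idca A B = B - A :=
  image_sub_product

theorem card_ula (I : ℤ) {s : ℤ} (hs : s ≠ 0) (N : ℕ) : (ULA I s N).card = N := by
  have hinj : Function.Injective fun k : ℕ => I + (k : ℤ) * s :=
    (add_right_injective I).comp ((mul_left_injective₀ hs).comp Nat.cast_injective)
  rw [ULA, card_image_of_injective _ hinj, card_range]

theorem ula_subset_Icc (I : ℤ) {s : ℤ} (hs : 0 ≤ s) (N : ℕ) :
    ULA I s N ⊆ Icc I (I + ((N : ℤ) - 1) * s) := by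
  refine image_subset_iff.mpr fun k hk => mem_Icc.mpr ⟨?_, ?_⟩
  · exact le_add_of_nonneg_right (by positivity)
  · have hk_le : (k : ℤ) ≤ (N : ℤ) - 1 := by
      have := mem_range.mp hk
      omega
    gcongr

theorem neg_ula (I s : ℤ) (N : ℕ) : -ULA I s N = ULA (-(I + ((N : ℤ) - 1) * s)) s N := by
  calc -ULA I s N
      = (range N).image fun k : ℕ => -(I + (k : ℤ) * s) := image_image
    _ = ((range N).image fun k => N - 1 - k).image fun k : ℕ => -(I + (k : ℤ) * s) := by
      rw [range_image_pred_top_sub]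
    _ = (range N).image fun k : ℕ => -(I + ((N - 1 - k : ℕ) : ℤ) * s) := image_image
    _ = ULA (-(I + ((N : ℤ) - 1) * s)) s N := image_congr fun k hk => by
      have hcast : ((N - 1 - k : ℕ) : ℤ) = N - 1 - k := by
        have := mem_range.mp hk
        omega
      rw [hcast]
      ring

theorem ula_add_ula (I s : ℤ) (M : ℕ) (J t : ℤ) (N : ℕ) :
    ULA I s M + ULA J t N =
      (range M ×ˢ range N).image
        fun jk : ℕ × ℕ => I + J + (jk.1 : ℤ) * s + (jk.2 : ℤ) * t := by
  rw [← image_add_product, ULA, ULA, ← prodMap_image_product, image_image]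
  exact image_congr fun jk _ => by
    simp only [Function.comp_apply, Prod.map_fst, Prod.map_snd]
    ring

theorem idca_ula (I₁ s₁ : ℤ) (N₁ : ℕ) (I₂ s₂ : ℤ) (N₂ : ℕ) :
    idca (ULA I₁ s₁ N₁) (ULA I₂ s₂ N₂) =
      ULA (I₂ - (I₁ + ((N₁ : ℤ) - 1) * s₁)) s₂ N₂ + ULA 0 s₁ N₁ := by
  rw [idca_eq_sub, sub_eq_add_neg, neg_ula, ula_add_ula, ula_add_ula, add_zero, ← sub_eq_add_neg]

theorem eq_of_add_mul_mem_period {g s i j t : ℤ} (ht : t ∈ Ico 0 s)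
    (hlower : g + j * s ≤ g + i * s + t) (hupper : g + i * s + t < g + (j + 1) * s) : i = j := by
  obtain ⟨ht_nonneg, ht_lt⟩ := mem_Ico.mp ht
  have hs : 0 ≤ s := ht_nonneg.trans ht_lt.le
  have hji : j < i + 1 := lt_of_mul_lt_mul_right (by linarith) hs
  have hij : i < j + 1 := lt_of_mul_lt_mul_right (by linarith) hs
  omega

theorem filter_period_ula_add {T : Finset ℤ} {s : ℤ} (hT : T ⊆ Ico 0 s) (g : ℤ) {N j : ℕ}
    (hj : j < N) :
    (ULA g s N + T).filter (fun d => g + (j : ℤ) * s ≤ d ∧ d < g + ((j : ℤ) + 1) * s) =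
      (g + (j : ℤ) * s) +ᵥ T := by
  ext d
  simp only [mem_filter, mem_add, ULA, mem_image, mem_range, mem_vadd_finset, vadd_eq_add]
  constructor
  · rintro ⟨⟨_, ⟨i, -, rfl⟩, t, ht, rfl⟩, hlower, hupper⟩
    have hij : (i : ℤ) = j := eq_of_add_mul_mem_period (hT ht) hlower hupper
    exact ⟨t, ht, by rw [hij]⟩
  · rintro ⟨t, ht, rfl⟩
    obtain ⟨ht_nonneg, ht_lt⟩ := mem_Ico.mp (hT ht)
    exact ⟨⟨_, ⟨j, hj, rfl⟩, t, ht, rfl⟩, by linarith, by linarith⟩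

end

/-- Proposition 1 (per-period form): if `s₂ > (N₁ - 1)·s₁` and
`g = I₂ - (I₁ + (N₁-1)·s₁)`, then the inter-difference coarray from `A` to `B`
equals `{g + j·s₂ + k·s₁ : 0 ≤ j ≤ N₂-1, 0 ≤ k ≤ N₁-1}`, and each period
`[g + j·s₂, g + (j+1)·s₂)` contains exactly `N₁` of its elements. -/
theorem idca_per_period (I₁ s₁ : ℤ) (N₁ : ℕ) (I₂ s₂ : ℤ) (N₂ : ℕ)
    (hs₁ : 1 ≤ s₁) (hN₁ : 1 ≤ N₁) (hN₂ : 1 ≤ N₂)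
    (h : ((N₁ : ℤ) - 1) * s₁ < s₂)
    (g : ℤ) (hg : g = I₂ - (I₁ + ((N₁ : ℤ) - 1) * s₁)) :
    idca (ULA I₁ s₁ N₁) (ULA I₂ s₂ N₂) =
      (Finset.range N₂ ×ˢ Finset.range N₁).image
        (fun jk : ℕ × ℕ => g + (jk.1 : ℤ) * s₂ + (jk.2 : ℤ) * s₁) ∧
    ∀ j : ℕ, j < N₂ →
      ((idca (ULA I₁ s₁ N₁) (ULA I₂ s₂ N₂)).filter
        (fun d => g + (j : ℤ) * s₂ ≤ d ∧ d < g + ((j : ℤ) + 1) * s₂)).card = N₁ := by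
  have hspan : ULA 0 s₁ N₁ ⊆ Finset.Ico 0 s₂ :=
    (ula_subset_Icc 0 (by omega) N₁).trans (Finset.Icc_subset_Ico_right (by rwa [zero_add]))
  rw [idca_ula, ← hg]
  refine ⟨by rw [ula_add_ula, add_zero], fun j hj => ?_⟩
  rw [filter_period_ula_add hspan g hj, Finset.card_vadd_finset, card_ula 0 (by omega)]
end

section
/- Let N_b ≥ 1 and N_t ≥ 2 be integers and let S be the UF-3BL array with parameters N_b, N_t. Then the difference coarray D(S) contains every integer d with |d| ≤ J, where J = 3N_bN_t + 5N_t + 3N_b − 1; i.e., the central consecutive segment of the coarray has at least 2J + 1 elements. -/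
/-!
The transfer layer `T` has step `M = 3 * Nb + 5`, so the differences between `T` and a fixed sensor
fill a residue class modulo `M`, up to one period at an end of the segment. Call the six sub-ULAs,
in order, lower base, lower pair, `T`, middle base, upper pair and upper base. In the period
`[k * M, (k + 1) * M)` the classes arise as follows:

* `0` from `T - T`, and `3, 6, …, 3 * Nb` from middle base `- T`;
* `1` from upper pair `- T`, and `4, 7, …, 3 * Nb + 1` from upper base `- T`;
* `2, 5, …, 3 * Nb - 1` from `T -` lower base;
* `3 * Nb + 2`, `3 * Nb + 3` from `T -` lower pair, and `3 * Nb + 4` from upper pair `- T`.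

The classes `1` and `2` modulo `3` missed by this at `k = 0` are differences within the lower and
upper parts of the array. As `J = Nt * M + 3 * Nb - 1`, the segment ends within the period
`k = Nt`, where the missed multiples of `3` come from middle base `-` lower pair.
-/

/-- Difference coarray of a finite set of sensor positions. -/
def dca (S : Finset ℤ) : Finset ℤ := (S ×ˢ S).image fun p => p.1 - p.2

/-- The UF-3BL sparse array with parameters `Nb` (base-layer sub-ULA size) and
`Nt` (transfer-layer size). -/
def UF3BL (Nb Nt : ℕ) : Finset ℤ :=
  ULA 0 3 Nb ∪
  ULA (3 * (Nb : ℤ) + 1) 1 2 ∪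
  ULA (6 * (Nb : ℤ) + 4) (3 * (Nb : ℤ) + 5) Nt ∪
  ULA (3 * (Nb : ℤ) * Nt + 5 * Nt + 3 * Nb + 2) 3 Nb ∪
  ULA (3 * (Nb : ℤ) * Nt + 5 * Nt + 6 * Nb + 3) 2 2 ∪
  ULA (3 * (Nb : ℤ) * Nt + 5 * Nt + 6 * Nb + 8) 3 Nb

section DifferenceCoarray

variable {S : Finset ℤ} {d : ℤ}

lemma mem_dca : d ∈ dca S ↔ ∃ p ∈ S, ∃ q ∈ S, p - q = d := by
  simp only [dca, Finset.mem_image, Finset.mem_product, Prod.exists, and_assoc,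
    exists_and_left]

lemma neg_mem_dca (hd : d ∈ dca S) : -d ∈ dca S := by
  obtain ⟨p, hp, q, hq, rfl⟩ := mem_dca.1 hd
  exact mem_dca.2 ⟨q, hq, p, hp, (neg_sub p q).symm⟩

lemma abs_mem_dca_iff : |d| ∈ dca S ↔ d ∈ dca S := by
  rcases abs_choice d with h | h <;> rw [h]
  exact ⟨fun hd => neg_neg d ▸ neg_mem_dca hd, neg_mem_dca⟩

end DifferenceCoarray

lemma add_mul_mem_ULA (I s : ℤ) {N : ℕ} {k : ℤ} (hk₀ : 0 ≤ k) (hk : k < N) :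
    I + k * s ∈ ULA I s N := by
  lift k to ℕ using hk₀
  exact Finset.mem_image_of_mem _ (Finset.mem_range.2 (Int.ofNat_lt.1 hk))

namespace UF3BL

variable {Nb Nt : ℕ} {i j k : ℤ}

lemma lowerBase_mem (hi₀ : 0 ≤ i) (hi : i < Nb) : i * 3 ∈ UF3BL Nb Nt := by
  rw [← zero_add (i * 3)]
  simp only [UF3BL, Finset.mem_union, add_mul_mem_ULA _ _ hi₀ hi, true_or]

lemma lowerPair_mem (hi₀ : 0 ≤ i) (hi : i < 2) : 3 * (Nb : ℤ) + 1 + i ∈ UF3BL Nb Nt := by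
  rw [← mul_one i]
  simp only [UF3BL, Finset.mem_union, add_mul_mem_ULA _ _ hi₀ hi, true_or, or_true]

lemma transfer_mem (hi₀ : 0 ≤ i) (hi : i < Nt) :
    6 * (Nb : ℤ) + 4 + i * (3 * Nb + 5) ∈ UF3BL Nb Nt := by
  simp only [UF3BL, Finset.mem_union, add_mul_mem_ULA _ _ hi₀ hi, true_or, or_true]

lemma middleBase_mem (hi₀ : 0 ≤ i) (hi : i < Nb) :
    3 * (Nb : ℤ) * Nt + 5 * Nt + 3 * Nb + 2 + i * 3 ∈ UF3BL Nb Nt := by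
  simp only [UF3BL, Finset.mem_union, add_mul_mem_ULA _ _ hi₀ hi, true_or, or_true]

lemma upperPair_mem (hi₀ : 0 ≤ i) (hi : i < 2) :
    3 * (Nb : ℤ) * Nt + 5 * Nt + 6 * Nb + 3 + i * 2 ∈ UF3BL Nb Nt := by
  simp only [UF3BL, Finset.mem_union, add_mul_mem_ULA _ _ hi₀ hi, true_or, or_true]

lemma upperBase_mem (hi₀ : 0 ≤ i) (hi : i < Nb) :
    3 * (Nb : ℤ) * Nt + 5 * Nt + 6 * Nb + 8 + i * 3 ∈ UF3BL Nb Nt := by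
  simp only [UF3BL, Finset.mem_union, add_mul_mem_ULA _ _ hi₀ hi, or_true]

lemma mul_add_three_mul_mem_dca (hk₀ : 0 ≤ k) (hk : k < Nt) (hj₀ : 0 ≤ j) (hj : j ≤ Nb + 1) :
    k * (3 * Nb + 5) + 3 * j ∈ dca (UF3BL Nb Nt) := by
  rw [mem_dca]
  obtain rfl | hj₁ := hj₀.eq_or_lt
  · exact ⟨_, transfer_mem hk₀ hk, _, transfer_mem (i := 0) le_rfl (by lia), by ring⟩
  obtain rfl | hjb := hj.eq_or_lt
  · exact ⟨_, transfer_mem hk₀ hk, _, lowerPair_mem (i := 0) le_rfl two_pos, by ring⟩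
  · exact ⟨_, middleBase_mem (i := j - 1) (by lia) (by lia),
      _, transfer_mem (i := Nt - 1 - k) (by lia) (by lia), by ring⟩

lemma mul_add_three_mul_add_one_mem_dca (hk₀ : 0 ≤ k) (hk : k ≤ Nt) (hj₀ : 0 ≤ j) (hj : j ≤ Nb) :
    k * (3 * Nb + 5) + (3 * j + 1) ∈ dca (UF3BL Nb Nt) := by
  rw [mem_dca]
  obtain rfl | hk₁ := hk₀.eq_or_lt <;> obtain rfl | hj₁ := hj₀.eq_or_lt
  · exact ⟨_, lowerPair_mem (i := 1) zero_le_one one_lt_two,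
      _, lowerPair_mem (i := 0) le_rfl two_pos, by ring⟩
  · exact ⟨_, lowerPair_mem (i := 0) le_rfl two_pos,
      _, lowerBase_mem (i := Nb - j) (by lia) (by lia), by ring⟩
  · exact ⟨_, upperPair_mem (i := 1) zero_le_one one_lt_two,
      _, transfer_mem (i := Nt - k) (by lia) (by lia), by ring⟩
  · exact ⟨_, upperBase_mem (i := j - 1) (by lia) (by lia),
      _, transfer_mem (i := Nt - k) (by lia) (by lia), by ring⟩

lemma mul_add_three_mul_add_two_mem_dca (hk₀ : 0 ≤ k) (hk : k ≤ Nt) (hj₀ : 0 ≤ j) (hj : j < Nb) :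
    k * (3 * Nb + 5) + (3 * j + 2) ∈ dca (UF3BL Nb Nt) := by
  rw [mem_dca]
  obtain rfl | hk₁ := hk₀.eq_or_lt
  · obtain rfl | hj₁ := hj₀.eq_or_lt
    · exact ⟨_, upperPair_mem (i := 1) zero_le_one one_lt_two,
        _, upperPair_mem (i := 0) le_rfl two_pos, by ring⟩
    · exact ⟨_, lowerPair_mem (i := 1) zero_le_one one_lt_two,
        _, lowerBase_mem (i := Nb - j) (by lia) (by lia), by ring⟩
  · exact ⟨_, transfer_mem (i := k - 1) (by lia) (by lia),
      _, lowerBase_mem (i := Nb - 1 - j) (by lia) (by lia), by ring⟩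

lemma mul_add_mem_dca {r : ℤ} (hk₀ : 0 ≤ k) (hk : k < Nt) (hr₀ : 0 ≤ r) (hr : r < 3 * Nb + 5) :
    k * (3 * Nb + 5) + r ∈ dca (UF3BL Nb Nt) := by
  obtain ⟨j, rfl | rfl | rfl⟩ : ∃ j, r = 3 * j ∨ r = 3 * j + 1 ∨ r = 3 * j + 2 :=
    ⟨r / 3, by lia⟩
  · exact mul_add_three_mul_mem_dca hk₀ hk (by lia) (by lia)
  · obtain rfl | hj : j = Nb + 1 ∨ j ≤ Nb := by lia
    · exact mem_dca.2 ⟨_, upperPair_mem (i := 0) le_rfl two_pos,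
        _, transfer_mem (i := Nt - 1 - k) (by lia) (by lia), by ring⟩
    · exact mul_add_three_mul_add_one_mem_dca hk₀ hk.le (by lia) hj
  · obtain rfl | hj : j = Nb ∨ j < Nb := by lia
    · exact mem_dca.2 ⟨_, transfer_mem hk₀ hk,
        _, lowerPair_mem (i := 1) zero_le_one one_lt_two, by ring⟩
    · exact mul_add_three_mul_add_two_mem_dca hk₀ hk.le (by lia) hj

lemma last_mul_add_mem_dca {r : ℤ} (hr₀ : 0 ≤ r) (hr : r < 3 * Nb) :
    Nt * (3 * Nb + 5) + r ∈ dca (UF3BL Nb Nt) := by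
  obtain ⟨j, rfl | rfl | rfl⟩ : ∃ j, r = 3 * j ∨ r = 3 * j + 1 ∨ r = 3 * j + 2 :=
    ⟨r / 3, by lia⟩
  · exact mem_dca.2 ⟨_, middleBase_mem (i := j) (by lia) (by lia),
      _, lowerPair_mem (i := 1) zero_le_one one_lt_two, by ring⟩
  · exact mul_add_three_mul_add_one_mem_dca (by lia) le_rfl (by lia) (by lia)
  · exact mul_add_three_mul_add_two_mem_dca (by lia) le_rfl (by lia) (by lia)

lemma mem_dca_of_lt_transfer {d : ℤ} (hd₀ : 0 ≤ d) (hd : d < Nt * (3 * Nb + 5)) :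
    d ∈ dca (UF3BL Nb Nt) := by
  have hM : (0 : ℤ) < 3 * Nb + 5 := by positivity
  rw [← Int.ediv_mul_add_emod d (3 * Nb + 5)]
  exact mul_add_mem_dca (Int.ediv_nonneg hd₀ hM.le) (Int.ediv_lt_of_lt_mul hM hd)
    (Int.emod_nonneg d hM.ne') (Int.emod_lt_of_pos d hM)

end UF3BL

/-- The difference coarray of the UF-3BL array contains every integer `d` with
`|d| ≤ J`, where `J = 3·Nb·Nt + 5·Nt + 3·Nb - 1`. -/
theorem uf3bl_central_segment (Nb Nt : ℕ) (hb : 1 ≤ Nb) (ht : 2 ≤ Nt) :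
    ∀ d : ℤ, |d| ≤ 3 * (Nb : ℤ) * Nt + 5 * Nt + 3 * Nb - 1 →
      d ∈ dca (UF3BL Nb Nt) := by
  intro d hd
  rw [← abs_mem_dca_iff]
  obtain h | h := lt_or_ge |d| ((Nt : ℤ) * (3 * Nb + 5))
  · exact UF3BL.mem_dca_of_lt_transfer (abs_nonneg d) h
  · rw [← add_sub_cancel ((Nt : ℤ) * (3 * Nb + 5)) |d|]
    exact UF3BL.last_mul_add_mem_dca (sub_nonneg.2 h) (by linarith)
end

section
/- Let N_b ≥ 1 and N_t ≥ 2 be integers and let S be the UF-3BL array with parameters N_b, N_t. Then its weight function satisfies w_S(1) = 1, w_S(2) = 1, and w_S(3) = 3N_b − 1. -/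
/-!
For two arrays, one to the left of the other, the weight of the union at `0 < n`, with `n` at most
the gap between them, is the sum of the two weights, plus one if `n` equals the gap. The six
sub-arrays of the UF-3BL array follow one another with gaps `4`, `3 * Nb + 2`, `3`, `4`, `3`, so for
`n ≤ 3` only their own weights and the two gaps of length `3` contribute. For `n = 3` this gives
`3 * (Nb - 1) + 2`.
-/

/-- Weight function: number of sensor pairs with difference `n`. -/
def weight (S : Finset ℤ) (n : ℤ) : ℕ :=
  ((S ×ˢ S).filter fun p => p.1 - p.2 = n).card

section CrossWeight

variable {S T A B : Finset ℤ} {a b g n : ℤ}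

/-- The cross weight of two arrays: the number of pairs of a sensor of `S` and a sensor of `T`
whose difference, in this order, is `n`. The weight function is the case `S = T`. -/
def crossWeight (S T : Finset ℤ) (n : ℤ) : ℕ :=
  ((S ×ˢ T).filter fun p => p.1 - p.2 = n).card

lemma crossWeight_self (S : Finset ℤ) (n : ℤ) : crossWeight S S n = weight S n := rfl

lemma crossWeight_union_left (h : Disjoint A B) (T : Finset ℤ) (n : ℤ) :
    crossWeight (A ∪ B) T n = crossWeight A T n + crossWeight B T n := by
  rw [crossWeight, Finset.union_product, Finset.filter_union]
  exact Finset.card_union_of_disjoint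
    (Finset.disjoint_filter_filter (Finset.disjoint_product.2 (.inl h)))

lemma crossWeight_union_right (S : Finset ℤ) (h : Disjoint A B) (n : ℤ) :
    crossWeight S (A ∪ B) n = crossWeight S A n + crossWeight S B n := by
  rw [crossWeight, Finset.product_union, Finset.filter_union]
  exact Finset.card_union_of_disjoint
    (Finset.disjoint_filter_filter (Finset.disjoint_product.2 (.inr h)))

lemma weight_union (h : Disjoint A B) (n : ℤ) :
    weight (A ∪ B) n =
      weight A n + weight B n + crossWeight A B n + crossWeight B A n := by
  simp only [← crossWeight_self, crossWeight_union_left h, crossWeight_union_right _ h]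
  ring

lemma crossWeight_eq_zero (h : ∀ p ∈ S, ∀ q ∈ T, p - q ≠ n) : crossWeight S T n = 0 := by
  rw [crossWeight, Finset.card_eq_zero, Finset.filter_eq_empty_iff]
  rintro ⟨p, q⟩ hpq
  exact h p (Finset.mem_product.1 hpq).1 q (Finset.mem_product.1 hpq).2

lemma crossWeight_sub_of_isLeast_of_isGreatest (hS : IsLeast (S : Set ℤ) b)
    (hT : IsGreatest (T : Set ℤ) a) : crossWeight S T (b - a) = 1 := by
  rw [crossWeight, Finset.card_eq_one]
  refine ⟨(b, a), Finset.ext fun ⟨p, q⟩ => ?_⟩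
  simp only [Finset.mem_filter, Finset.mem_product, Finset.mem_singleton, Prod.mk.injEq]
  constructor
  · rintro ⟨⟨hp, hq⟩, hpq⟩
    have hbp : b ≤ p := hS.2 hp
    have hqa : q ≤ a := hT.2 hq
    omega
  · rintro ⟨rfl, rfl⟩
    exact ⟨⟨hS.1, hT.1⟩, rfl⟩

lemma weight_union_of_gap (hA : IsGreatest (A : Set ℤ) a) (hB : IsLeast (B : Set ℤ) b)
    (hgap : b - a = g) (hn : 0 < n) (hng : n ≤ g) :
    weight (A ∪ B) n = weight A n + weight B n + if n = g then 1 else 0 := by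
  have sub_ge : ∀ p ∈ B, ∀ q ∈ A, g ≤ p - q := fun p hp q hq => by
    have hbp : b ≤ p := hB.2 hp
    have hqa : q ≤ a := hA.2 hq
    omega
  have disj : Disjoint A B := Finset.disjoint_left.2 fun x hxA hxB => by
    have := sub_ge x hxB x hxA
    omega
  have crossWeight_AB : crossWeight A B n = 0 := crossWeight_eq_zero fun p hp q hq => by
    have := sub_ge q hq p hp
    omega
  have crossWeight_BA : crossWeight B A n = if n = g then 1 else 0 := by
    split_ifs with h
    · rw [h, ← hgap, crossWeight_sub_of_isLeast_of_isGreatest hB hA]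
    · refine crossWeight_eq_zero fun p hp q hq => ?_
      have := sub_ge p hp q hq
      omega
  rw [weight_union disj, crossWeight_AB, crossWeight_BA, add_zero]

lemma isGreatest_union_of_le (hA : IsGreatest (A : Set ℤ) a) (hB : IsGreatest (B : Set ℤ) b)
    (hab : a ≤ b) : IsGreatest ((A ∪ B : Finset ℤ) : Set ℤ) b := by
  simpa only [Finset.coe_union, max_eq_right hab] using hA.union hB

end CrossWeight

section ULA

variable {I s n x : ℤ} {N : ℕ}

lemma mem_ULA : x ∈ ULA I s N ↔ ∃ k : ℤ, (0 ≤ k ∧ k < N) ∧ I + k * s = x := by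
  simp only [ULA, Finset.mem_image, Finset.mem_range]
  constructor
  · rintro ⟨k, hk, rfl⟩
    exact ⟨k, ⟨by positivity, by exact_mod_cast hk⟩, rfl⟩
  · rintro ⟨k, ⟨hk, hkN⟩, rfl⟩
    lift k to ℕ using hk
    exact ⟨k, by exact_mod_cast hkN, rfl⟩

lemma isLeast_ULA (I : ℤ) (hs : 0 ≤ s) (hN : 1 ≤ N) : IsLeast (ULA I s N : Set ℤ) I := by
  refine ⟨mem_ULA.2 ⟨0, by omega, by ring⟩, fun x hx => ?_⟩
  obtain ⟨k, ⟨hk, -⟩, rfl⟩ := mem_ULA.1 hx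
  exact le_add_of_nonneg_right (mul_nonneg hk hs)

lemma isGreatest_ULA (I : ℤ) (hs : 0 ≤ s) (hN : 1 ≤ N) :
    IsGreatest (ULA I s N : Set ℤ) (I + (N - 1) * s) := by
  refine ⟨mem_ULA.2 ⟨N - 1, by omega, rfl⟩, fun x hx => ?_⟩
  obtain ⟨k, ⟨-, hk⟩, rfl⟩ := mem_ULA.1 hx
  have hk' : k ≤ N - 1 := by omega
  gcongr

lemma weight_ULA_of_not_dvd (I : ℤ) (N : ℕ) (h : ¬s ∣ n) : weight (ULA I s N) n = 0 := by
  rw [← crossWeight_self]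
  refine crossWeight_eq_zero fun p hp q hq hpq => h ?_
  obtain ⟨k, -, rfl⟩ := mem_ULA.1 hp
  obtain ⟨l, -, rfl⟩ := mem_ULA.1 hq
  exact ⟨k - l, by rw [← hpq]; ring⟩

lemma weight_ULA_of_pos_of_lt (I : ℤ) (N : ℕ) (hn : 0 < n) (hns : n < s) :
    weight (ULA I s N) n = 0 :=
  weight_ULA_of_not_dvd I N fun h => (Int.le_of_dvd hn h).not_gt hns

lemma weight_ULA_mul (I : ℤ) (hs : s ≠ 0) (N : ℕ) (m : ℤ) :
    weight (ULA I s N) (m * s) = N - m.natAbs := by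
  let lowerIndices : Finset ℤ := Finset.Ico (max 0 (-m)) (min (N : ℤ) (N - m))
  let pair : ℤ → ℤ × ℤ := fun l => (I + (l + m) * s, I + l * s)
  have pair_injective : pair.Injective := fun k l h =>
    mul_right_cancel₀ hs (add_left_cancel (Prod.ext_iff.1 h).2)
  have pairs_eq : ((ULA I s N ×ˢ ULA I s N).filter fun p => p.1 - p.2 = m * s) =
      lowerIndices.image pair := by
    ext ⟨p, q⟩
    simp only [Finset.mem_filter, Finset.mem_product, Finset.mem_image, mem_ULA, lowerIndices,
      pair, Finset.mem_Ico, Prod.mk.injEq]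
    constructor
    · rintro ⟨⟨⟨k, hk, rfl⟩, ⟨l, hl, rfl⟩⟩, hkl⟩
      obtain rfl : k = l + m := mul_right_cancel₀ hs (by linarith)
      exact ⟨l, by omega, rfl, rfl⟩
    · rintro ⟨l, hl, rfl, rfl⟩
      exact ⟨⟨⟨l + m, by omega, rfl⟩, ⟨l, by omega, rfl⟩⟩, by ring⟩
  rw [weight, pairs_eq, Finset.card_image_of_injective _ pair_injective, Int.card_Ico]
  omega

lemma weight_ULA (I : ℤ) (hs : s ≠ 0) (N : ℕ) (n : ℤ) :
    weight (ULA I s N) n = if s ∣ n then N - (n / s).natAbs else 0 := by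
  split_ifs with h
  · rw [← weight_ULA_mul I hs, Int.ediv_mul_cancel h]
  · exact weight_ULA_of_not_dvd I N h

end ULA

section UF3BL

variable {Nb Nt : ℕ} {n : ℤ}

lemma weight_UF3BL_eq_sum_weight_ULA (hb : 1 ≤ Nb) (ht : 1 ≤ Nt) (hn : 0 < n) (hn3 : n ≤ 3) :
    weight (UF3BL Nb Nt) n =
      weight (ULA 0 3 Nb) n +
      weight (ULA (3 * (Nb : ℤ) + 1) 1 2) n +
      weight (ULA (6 * (Nb : ℤ) + 4) (3 * (Nb : ℤ) + 5) Nt) n +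
      weight (ULA (3 * (Nb : ℤ) * Nt + 5 * Nt + 3 * Nb + 2) 3 Nb) n +
      weight (ULA (3 * (Nb : ℤ) * Nt + 5 * Nt + 6 * Nb + 3) 2 2) n +
      weight (ULA (3 * (Nb : ℤ) * Nt + 5 * Nt + 6 * Nb + 8) 3 Nb) n +
      if n = 3 then 2 else 0 := by
  have greatest₁ := isGreatest_ULA 0 zero_le_three hb
  have greatest₂ := isGreatest_union_of_le greatest₁
    (isGreatest_ULA (3 * (Nb : ℤ) + 1) zero_le_one one_le_two) (by push_cast; linarith)
  have greatest₃ := isGreatest_union_of_le greatest₂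
    (isGreatest_ULA (6 * (Nb : ℤ) + 4) (by positivity : 0 ≤ 3 * (Nb : ℤ) + 5) ht)
    (by push_cast; nlinarith)
  have greatest₄ := isGreatest_union_of_le greatest₃
    (isGreatest_ULA (3 * (Nb : ℤ) * Nt + 5 * Nt + 3 * Nb + 2) zero_le_three hb) (by linarith)
  have greatest₅ := isGreatest_union_of_le greatest₄
    (isGreatest_ULA (3 * (Nb : ℤ) * Nt + 5 * Nt + 6 * Nb + 3) zero_le_two one_le_two)
    (by push_cast; linarith)
  rw [UF3BL,
    weight_union_of_gap (g := 3) greatest₅ (isLeast_ULA _ zero_le_three hb)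
      (by push_cast; ring) hn hn3,
    weight_union_of_gap (g := 4) greatest₄ (isLeast_ULA _ zero_le_two one_le_two)
      (by ring) hn (by omega),
    weight_union_of_gap (g := 3) greatest₃ (isLeast_ULA _ zero_le_three hb)
      (by ring) hn hn3,
    weight_union_of_gap (g := 3 * Nb + 2) greatest₂ (isLeast_ULA _ (by positivity) ht)
      (by push_cast; ring) hn (by omega),
    weight_union_of_gap (g := 4) greatest₁ (isLeast_ULA _ zero_le_one one_le_two)
      (by ring) hn (by omega),
    if_neg (by omega : n ≠ 4), if_neg (by omega : n ≠ 3 * (Nb : ℤ) + 2)]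
  split_ifs <;> ring

end UF3BL

/-- The weight function of the UF-3BL array satisfies
`w(1) = 1`, `w(2) = 1`, `w(3) = 3·Nb - 1`. -/
theorem uf3bl_weights (Nb Nt : ℕ) (hb : 1 ≤ Nb) (ht : 2 ≤ Nt) :
    weight (UF3BL Nb Nt) 1 = 1 ∧
    weight (UF3BL Nb Nt) 2 = 1 ∧
    weight (UF3BL Nb Nt) 3 = 3 * Nb - 1 := by
  have weight_eq {n : ℤ} (hn : 0 < n) (hn3 : n ≤ 3) :=
    weight_UF3BL_eq_sum_weight_ULA hb (one_le_two.trans ht) hn hn3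
  have weight_transfer {n : ℤ} (hn : 0 < n) (hn3 : n ≤ 3) :
      weight (ULA (6 * (Nb : ℤ) + 4) (3 * (Nb : ℤ) + 5) Nt) n = 0 :=
    weight_ULA_of_pos_of_lt _ _ hn (by omega)
  have weight_ladder (I : ℤ) : weight (ULA I 3 Nb) 3 = Nb - 1 := by simp [weight_ULA]
  refine ⟨?_, ?_, ?_⟩
  · rw [weight_eq one_pos (by norm_num), weight_transfer one_pos (by norm_num)]
    simp [weight_ULA]
  · rw [weight_eq two_pos (by norm_num), weight_transfer two_pos (by norm_num)]
    simp [weight_ULA]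
  · calc weight (UF3BL Nb Nt) 3 = (Nb - 1) + 0 + 0 + (Nb - 1) + 0 + (Nb - 1) + 2 := by
          rw [weight_eq three_pos le_rfl, weight_transfer three_pos le_rfl]
          simp [weight_ladder, weight_ULA]
      _ = 3 * Nb - 1 := by omega
end

section
/- (Optimal parameter selection for UF-3BL) Let N ≥ 17 be an integer. For an integer N_b, set N_t = N − 3N_b − 4 and J(N_b) = 3N_bN_t + 5N_t + 3N_b − 1 = −9N_b² + 3(N − 8)N_b + 5N − 21. Then for every integer N_b, J(N_b) ≤ J(⌊(N − 5)/6⌋); i.e., the choice N_b = ⌊(N − 5)/6⌋ maximizes J. -/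
/-!
Completing the square, `-a x² + b x + c` decreases with `|b / (2a) - x|` when `0 < a`, so its
maximum over the integers is attained at the integer nearest to `b / (2a)`. For integers `a`, `b`
this is `⌊b / (2a) + 1 / 2⌋ = ⌊(b + a) / (2a)⌋`. Here `a = 9` and `b = 3 (N - 8)`, which gives
`⌊(3 N - 15) / 18⌋ = ⌊(N - 5) / 6⌋`.
-/

section IntegerMaximum

variable {K : Type*} [Field K] [LinearOrder K] [IsStrictOrderedRing K]

theorem quadratic_le_quadratic_of_abs_sub_le {a b x y : K} (ha : 0 < a) (c : K)
    (h : |b / (2 * a) - y| ≤ |b / (2 * a) - x|) :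
    -a * x ^ 2 + b * x + c ≤ -a * y ^ 2 + b * y + c := by
  have complete_square (z : K) :
      -a * z ^ 2 + b * z + c = b ^ 2 / (4 * a) + c - a * (b / (2 * a) - z) ^ 2 := by
    field_simp
    ring
  rw [complete_square x, complete_square y]
  gcongr _ - a * ?_
  exact sq_le_sq.mpr h

variable [FloorRing K]

theorem quadratic_le_quadratic_round {a : K} (ha : 0 < a) (b c : K) (x : ℤ) :
    -a * x ^ 2 + b * x + c ≤
      -a * round (b / (2 * a)) ^ 2 + b * round (b / (2 * a)) + c :=
  quadratic_le_quadratic_of_abs_sub_le ha c (round_le (b / (2 * a)) x)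

variable (K) in
theorem round_intCast_div_two_mul {n : ℤ} (hn : 0 < n) (m : ℤ) :
    round ((m : K) / (2 * n)) = (m + n) / (2 * n) := by
  have cast_ne_zero : (n : K) ≠ 0 := mod_cast hn.ne'
  calc round ((m : K) / (2 * n))
      = ⌊(m : K) / (2 * n) + 1 / 2⌋ := round_eq _
    _ = ⌊((m + n : ℤ) : K) / (2 * n : ℤ)⌋ := by
      congr 1
      push_cast
      field_simp
    _ = (m + n) / (2 * n) := by
      rw [Int.floor_div_cast_of_nonneg (by positivity), Int.floor_intCast]

end IntegerMaximum

theorem int_quadratic_le_quadratic_ediv {a : ℤ} (ha : 0 < a) (b c x : ℤ) :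
    -a * x ^ 2 + b * x + c ≤
      -a * ((b + a) / (2 * a)) ^ 2 + b * ((b + a) / (2 * a)) + c := by
  have h := quadratic_le_quadratic_round (K := ℚ) (mod_cast ha : (0 : ℚ) < a) b c x
  rw [round_intCast_div_two_mul ℚ ha] at h
  exact_mod_cast h

theorem uf3bl_optimal_parameters_general (N : ℤ) (J : ℤ → ℤ)
    (hJ : ∀ Nb : ℤ, J Nb = 3 * Nb * (N - 3 * Nb - 4) + 5 * (N - 3 * Nb - 4) + 3 * Nb - 1) :
    (∀ Nb : ℤ, J Nb = -9 * Nb ^ 2 + 3 * (N - 8) * Nb + 5 * N - 21) ∧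
    (∀ Nb : ℤ, J Nb ≤ J ((N - 5) / 6)) := by
  have expand (Nb : ℤ) : J Nb = -9 * Nb ^ 2 + 3 * (N - 8) * Nb + 5 * N - 21 := by
    rw [hJ]
    ring
  have maximizer : (3 * (N - 8) + 9) / (2 * 9) = (N - 5) / 6 := by omega
  refine ⟨expand, fun Nb ↦ ?_⟩
  rw [expand, expand, ← maximizer, add_sub_assoc, add_sub_assoc]
  exact int_quadratic_le_quadratic_ediv (by norm_num) (3 * (N - 8)) (5 * N - 21) Nb

/-- Optimal parameter selection for UF-3BL: with `N_t = N - 3·N_b - 4` and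
`J(N_b) = 3·N_b·N_t + 5·N_t + 3·N_b - 1 = -9·N_b² + 3(N-8)·N_b + 5N - 21`, the
choice `N_b = ⌊(N-5)/6⌋` maximizes `J` over all integers `N_b`. -/
theorem uf3bl_optimal_parameters (N : ℤ) (hN : 17 ≤ N) (J : ℤ → ℤ)
    (hJ : ∀ Nb : ℤ, J Nb = 3 * Nb * (N - 3 * Nb - 4) + 5 * (N - 3 * Nb - 4) + 3 * Nb - 1) :
    (∀ Nb : ℤ, J Nb = -9 * Nb ^ 2 + 3 * (N - 8) * Nb + 5 * N - 21) ∧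
    (∀ Nb : ℤ, J Nb ≤ J ((N - 5) / 6)) :=
  uf3bl_optimal_parameters_general N J hJ
end

section
/- Let N ≥ 17 be an integer, N_b = ⌊(N − 5)/6⌋, and N_t = N − 3N_b − 4. Then the uniform degrees of freedom 2(3N_bN_t + 5N_t + 3N_b − 1) + 1 equals (N² + 4N − 22)/2 if N ≡ 0 or 4 (mod 6), equals (N² + 4N − 19)/2 if N ≡ 1 or 3 (mod 6), equals (N² + 4N − 18)/2 if N ≡ 2 (mod 6), and equals (N² + 4N − 27)/2 if N ≡ 5 (mod 6). -/
/-! With `Nt` eliminated, twice the uDOF is a concave quadratic in `Nb` with vertex `(N - 8) / 6`,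
and `⌊(N - 5) / 6⌋` is that vertex rounded to the nearest integer. The residue of `N` modulo 6
thus fixes the distance to the vertex, hence the amount lost from the maximum
`N ^ 2 + 4 * N - 18`. -/

theorem two_mul_uf3bl_udof_eq_sub_sq {R : Type*} [CommRing R] {N Nb Nt : R}
    (hNt : Nt = N - 3 * Nb - 4) :
    2 * (2 * (3 * Nb * Nt + 5 * Nt + 3 * Nb - 1) + 1) =
      N ^ 2 + 4 * N - 18 - (N - 6 * Nb - 8) ^ 2 := by
  subst hNt
  ring

theorem uf3bl_udof_general {N Nb Nt : ℤ} (hNb : Nb = (N - 5) / 6) (hNt : Nt = N - 3 * Nb - 4) :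
    ((N % 6 = 0 ∨ N % 6 = 4) →
      2 * (2 * (3 * Nb * Nt + 5 * Nt + 3 * Nb - 1) + 1) = N ^ 2 + 4 * N - 22) ∧
    ((N % 6 = 1 ∨ N % 6 = 3) →
      2 * (2 * (3 * Nb * Nt + 5 * Nt + 3 * Nb - 1) + 1) = N ^ 2 + 4 * N - 19) ∧
    (N % 6 = 2 →
      2 * (2 * (3 * Nb * Nt + 5 * Nt + 3 * Nb - 1) + 1) = N ^ 2 + 4 * N - 18) ∧
    (N % 6 = 5 →
      2 * (2 * (3 * Nb * Nt + 5 * Nt + 3 * Nb - 1) + 1) = N ^ 2 + 4 * N - 27) := by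
  rw [two_mul_uf3bl_udof_eq_sub_sq hNt]
  refine ⟨fun hr ↦ ?_, fun hr ↦ ?_, fun hr ↦ ?_, fun hr ↦ ?_⟩
  · have loss : (N - 6 * Nb - 8) ^ 2 = 2 ^ 2 := sq_eq_sq_iff_eq_or_eq_neg.mpr (by omega)
    linarith
  · have loss : (N - 6 * Nb - 8) ^ 2 = 1 ^ 2 := sq_eq_sq_iff_eq_or_eq_neg.mpr (by omega)
    linarith
  · have at_vertex : N - 6 * Nb - 8 = 0 := by omega
    simp [at_vertex]
  · have below_vertex : N - 6 * Nb - 8 = -3 := by omega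
    rw [below_vertex]
    ring

/-- uDOF of the UF-3BL array with optimal parameters: for `N ≥ 17`,
`N_b = ⌊(N-5)/6⌋`, `N_t = N - 3·N_b - 4`, the uniform degrees of freedom
`2·(3·N_b·N_t + 5·N_t + 3·N_b - 1) + 1` is given by the stated closed form
depending on `N mod 6`. -/
theorem uf3bl_udof (N : ℤ) (hN : 17 ≤ N) (Nb Nt : ℤ)
    (hNb : Nb = (N - 5) / 6) (hNt : Nt = N - 3 * Nb - 4) :
    ((N % 6 = 0 ∨ N % 6 = 4) →
      2 * (3 * Nb * Nt + 5 * Nt + 3 * Nb - 1) + 1 = (N ^ 2 + 4 * N - 22) / 2) ∧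
    ((N % 6 = 1 ∨ N % 6 = 3) →
      2 * (3 * Nb * Nt + 5 * Nt + 3 * Nb - 1) + 1 = (N ^ 2 + 4 * N - 19) / 2) ∧
    (N % 6 = 2 →
      2 * (3 * Nb * Nt + 5 * Nt + 3 * Nb - 1) + 1 = (N ^ 2 + 4 * N - 18) / 2) ∧
    (N % 6 = 5 →
      2 * (3 * Nb * Nt + 5 * Nt + 3 * Nb - 1) + 1 = (N ^ 2 + 4 * N - 27) / 2) := by
  have two_mul_udof := uf3bl_udof_general hNb hNt
  omega
end

section
/- (Optimal parameter selection for UF-4BL) Let N ≥ 32 be an integer. For an integer N_b, set N_t = N − 4N_b − 6 and J(N_b) = 4N_bN_t + 7N_t + 4N_b + 12 = −16N_b² + 4(N − 12)N_b + 7N − 30. Then for every integer N_b, J(N_b) ≤ J(⌊(N − 8)/8⌋); i.e., the choice N_b = ⌊(N − 8)/8⌋ maximizes J. -/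
/-!
The maximum of a concave quadratic over the integers is attained at an integer nearest its vertex.
Indeed, if `m` is within `1 / 2` of the vertex of `f x = a x² + b x + c`, then `|f' m| ≤ -a`, while
`f n = f m + f' m (n - m) + a (n - m)²` and `|n - m| ≤ (n - m)²` because `n - m` is an integer.
The vertex of `J` is `(N - 12) / 8`, and `⌊(N - 8) / 8⌋ = ⌊(N - 12) / 8 + 1 / 2⌋` is an integer
nearest to it.
-/

theorem quadratic_intCast_le_of_abs_two_mul_add_le_neg {R : Type*} [CommRing R] [LinearOrder R]
    [IsStrictOrderedRing R] {a b : R} {m : ℤ} (hm : |2 * a * m + b| ≤ -a) (c : R) (n : ℤ) :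
    a * n ^ 2 + b * n + c ≤ a * m ^ 2 + b * m + c := by
  have ha : 0 ≤ -a := (abs_nonneg _).trans hm
  have habs_le_sq : |(n - m : R)| ≤ (n - m : R) ^ 2 := by
    exact_mod_cast (Int.le_self_sq |n - m|).trans_eq (sq_abs (n - m))
  have hlinear : (2 * a * m + b) * (n - m) ≤ -a * (n - m) ^ 2 :=
    calc (2 * a * m + b) * (n - m) ≤ |2 * a * m + b| * |(n - m : R)| :=
          (le_abs_self _).trans (abs_mul _ _).le
      _ ≤ -a * (n - m) ^ 2 := mul_le_mul hm habs_le_sq (abs_nonneg _) ha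
  linear_combination hlinear

theorem uf4bl_optimal_parameters_general (N : ℤ) (J : ℤ → ℤ)
    (hJ : ∀ Nb : ℤ, J Nb = 4 * Nb * (N - 4 * Nb - 6) + 7 * (N - 4 * Nb - 6) + 4 * Nb + 12) :
    (∀ Nb : ℤ, J Nb = -16 * Nb ^ 2 + 4 * (N - 12) * Nb + 7 * N - 30) ∧
    (∀ Nb : ℤ, J Nb ≤ J ((N - 8) / 8)) := by
  have hquad (Nb : ℤ) : J Nb = -16 * Nb ^ 2 + 4 * (N - 12) * Nb + 7 * N - 30 := by
    rw [hJ]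
    ring
  have hderiv : |2 * (-16) * ((N - 8) / 8) + 4 * (N - 12)| ≤ -(-16) := by
    rw [abs_le]
    omega
  refine ⟨hquad, fun Nb => ?_⟩
  simpa only [hquad, Int.cast_id, add_sub_assoc] using
    quadratic_intCast_le_of_abs_two_mul_add_le_neg (m := (N - 8) / 8) hderiv (7 * N - 30) Nb

/-- Optimal parameter selection for UF-4BL: with `N_t = N - 4·N_b - 6` and
`J(N_b) = 4·N_b·N_t + 7·N_t + 4·N_b + 12 = -16·N_b² + 4(N-12)·N_b + 7N - 30`, the
choice `N_b = ⌊(N-8)/8⌋` maximizes `J` over all integers `N_b`. -/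
theorem uf4bl_optimal_parameters (N : ℤ) (hN : 32 ≤ N) (J : ℤ → ℤ)
    (hJ : ∀ Nb : ℤ, J Nb = 4 * Nb * (N - 4 * Nb - 6) + 7 * (N - 4 * Nb - 6) + 4 * Nb + 12) :
    (∀ Nb : ℤ, J Nb = -16 * Nb ^ 2 + 4 * (N - 12) * Nb + 7 * N - 30) ∧
    (∀ Nb : ℤ, J Nb ≤ J ((N - 8) / 8)) :=
  uf4bl_optimal_parameters_general N J hJ
end
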